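/- Let $X$ be a Borel-measurable, zero-mean Gaussian random element in a separable Banach space $(\mathbb{B},\|\cdot\|)$ with RKHS $(\mathbb{H},\|\cdot\|_{\mathbb{H}})$, and let $f$ be contained in the closure of $\mathbb{H}$ in $\mathbb{B}$. For any $\eps_n>0$ and $\gamma_n\ge1$ satisfying $\inf_{h:\|h-f\|\le\eps_n}\|h\|_{\mathbb{H}}^2-\log\mathbb{P}(\|X\|\le\eps_n)\le\gamma_n$, and for any $C_*\ge1$, there exists a Borel set $B_n\subset\mathbb{B}$ such that $\log N(3\eps_n,B_n,\|\cdot\|)\le6C_*\gamma_n$, $\mathbb{P}(X\notin B_n)\le e^{-C_*\gamma_n}$, and $\mathbb{P}(\|X-f\|\le2\eps_n)\ge e^{-\gamma_n}$. -/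

import Mathlib

open MeasureTheory Real Set Filter
open scoped ENNReal NNReal Topology

noncomputable section

/-- The integral of `f` over `[0,1]`. -/
def intI (f : ℝ → ℝ) : ℝ := ∫ x in Set.Icc (0:ℝ) 1, f x

/-- The `L¹([0,1])` distance between `f` and `g`. -/
def dist1 (f g : ℝ → ℝ) : ℝ := ∫ x in Set.Icc (0:ℝ) 1, |f x - g x|

/-- `∫₀¹ (f-g)₊`. -/
def intPos (f g : ℝ → ℝ) : ℝ := ∫ x in Set.Icc (0:ℝ) 1, max (f x - g x) 0

/-- `f ≤ g` Lebesgue-almost everywhere on `[0,1]`. -/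
def aeLeI (f g : ℝ → ℝ) : Prop :=
  ∀ᵐ x ∂((volume : Measure ℝ).restrict (Set.Icc (0:ℝ) 1)), f x ≤ g x

/-- The intensity measure `λ_f(x,y) = n · 1(f(x) ≤ y)` on `[0,1] × ℝ`. -/
def intensity (n : ℕ) (f : ℝ → ℝ) : Measure (ℝ × ℝ) :=
  ((volume : Measure (ℝ × ℝ)).restrict (Set.Icc (0:ℝ) 1 ×ˢ (Set.univ : Set ℝ))).withDensity
    (fun p => if f p.1 ≤ p.2 then (n : ℝ≥0∞) else 0)

/-- `P` is the law of a Poisson point process with (σ-finite, simple) intensity measure `μ`,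
whose support points are measurably enumerated by `pts`; the law is characterised through its
void probabilities `P(N(A) = 0) = exp(-μ(A))`. -/
def IsPoissonPP {Ω : Type*} [MeasurableSpace Ω] (μ : Measure (ℝ × ℝ)) (P : Measure Ω)
    (pts : Ω → ℕ → ℝ × ℝ) : Prop :=
  IsProbabilityMeasure P ∧ (∀ i, Measurable fun ω => pts ω i) ∧
    ∀ A : Set (ℝ × ℝ), MeasurableSet A →
      P {ω | ∀ i, pts ω i ∉ A} =
        if μ A = ∞ then 0 else ENNReal.ofReal (Real.exp (-(μ A).toReal))

/-- The support boundary detection model: for every `n` and every `f ∈ L¹([0,1])`,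
`P n f` is the law of a Poisson point process with intensity `n · 1(f(x) ≤ y)`,
with support points `(Xᵢ, Yᵢ)ᵢ = pts`. -/
def IsBoundaryModel {Ω : Type*} [MeasurableSpace Ω] (P : ℕ → (ℝ → ℝ) → Measure Ω)
    (pts : Ω → ℕ → ℝ × ℝ) : Prop :=
  ∀ n f, IntegrableOn f (Set.Icc (0:ℝ) 1) → IsPoissonPP (intensity n f) (P n f) pts

/-- The likelihood `e^{n∫f} · 1(∀ i : f(Xᵢ) ≤ Yᵢ)` of `f` given the data `ω`. -/
def lik {Ω : Type*} (n : ℕ) (pts : Ω → ℕ → ℝ × ℝ) (f : ℝ → ℝ) (ω : Ω) : ℝ≥0∞ :=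
  {ω' : Ω | ∀ i, f (pts ω' i).1 ≤ (pts ω' i).2}.indicator
    (fun _ => ENNReal.ofReal (Real.exp (n * intI f))) ω

/-- The posterior mass of the set `B ⊆ Θ` given the data `ω`, for the prior `Pi` on `Θ`
embedded into `L¹([0,1])` via `ι`:
`Π(B | N) = ∫_B e^{n∫f} 1(∀i : f(Xᵢ) ≤ Yᵢ) dΠ(f) / ∫_Θ e^{n∫f} 1(∀i : f(Xᵢ) ≤ Yᵢ) dΠ(f)`. -/
def post {Ω Θ : Type*} [MeasurableSpace Θ] (n : ℕ) (pts : Ω → ℕ → ℝ × ℝ) (Pi : Measure Θ)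
    (ι : Θ → ℝ → ℝ) (B : Set Θ) (ω : Ω) : ℝ≥0∞ :=
  (∫⁻ θ in B, lik n pts (ι θ) ω ∂Pi) / ∫⁻ θ, lik n pts (ι θ) ω ∂Pi

/-- A prior on a Polish space `Θ` which embeds continuously into `L¹([0,1])` via `ι`. -/
def IsL1Prior {Θ : Type*} [MeasurableSpace Θ] [TopologicalSpace Θ] (Pi : Measure Θ)
    (ι : Θ → ℝ → ℝ) : Prop :=
  IsProbabilityMeasure Pi ∧ Measurable (Function.uncurry ι) ∧
    (∀ θ, IntegrableOn (ι θ) (Set.Icc (0:ℝ) 1)) ∧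
    ∀ θ₀, Tendsto (fun θ => dist1 (ι θ) (ι θ₀)) (𝓝 θ₀) (𝓝 0)

/-- A Borel-measurable zero-mean Gaussian random element of a normed space, described through
its law `μ`: every continuous linear functional has a centred Gaussian distribution. -/
def IsCenteredGaussian {E : Type*} [NormedAddCommGroup E] [NormedSpace ℝ E]
    [MeasurableSpace E] (μ : Measure E) : Prop :=
  IsProbabilityMeasure μ ∧
    ∀ L : E →L[ℝ] ℝ, ∃ v : ℝ≥0, μ.map L = ProbabilityTheory.gaussianReal 0 v

/-- The squared RKHS (Cameron–Martin) norm `‖h‖²_ℍ` of the Gaussian law `μ`,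
`‖h‖_ℍ = sup { L(h) : L ∈ E*, E_μ[L²] ≤ 1 }` (`∞` if `h` is not in the RKHS). -/
def cmNormSq {E : Type*} [NormedAddCommGroup E] [NormedSpace ℝ E] [MeasurableSpace E]
    (μ : Measure E) (h : E) : ℝ≥0∞ :=
  ⨆ (L : E →L[ℝ] ℝ) (_ : ∫ x, (L x) ^ 2 ∂μ ≤ 1), ENNReal.ofReal (L h) ^ 2

/-- The `ε`-covering number of a subset `B` of a normed space. -/
def covN {E : Type*} [NormedAddCommGroup E] (ε : ℝ) (B : Set E) : ℕ∞ :=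
  ⨅ (G : Finset E) (_ : ∀ x ∈ B, ∃ g ∈ G, ‖x - g‖ ≤ ε), (G.card : ℕ∞)

/-- The embedding of `C([0,1])` into functions on `ℝ` (extending constantly outside `[0,1]`). -/
def embC (g : C(Set.Icc (0:ℝ) 1, ℝ)) : ℝ → ℝ :=
  fun x => g (Set.projIcc 0 1 zero_le_one x)

section helpers
open ProbabilityTheory

variable {E : Type*} [NormedAddCommGroup E] [NormedSpace ℝ E] [CompleteSpace E]
    [TopologicalSpace.SeparableSpace E] [MeasurableSpace E] [BorelSpace E]

theorem cg_isGaussian {E : Type*} [NormedAddCommGroup E] [NormedSpace ℝ E]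
    [MeasurableSpace E] [BorelSpace E] {μ : Measure E} (hG : IsCenteredGaussian μ) :
    IsGaussian μ :=
  isGaussian_of_map_eq_gaussianReal fun L => by
    obtain ⟨v, hv⟩ := hG.2 L
    exact ⟨0, v, hv⟩

theorem cg_map {E : Type*} [NormedAddCommGroup E] [NormedSpace ℝ E]
    [MeasurableSpace E] [BorelSpace E] {μ : Measure E} (hG : IsCenteredGaussian μ)
    (L : E →L[ℝ] ℝ) :
    μ.map L = gaussianReal 0 (∫ x, (L x) ^ 2 ∂μ).toNNReal := by
  obtain ⟨v, hv⟩ := hG.2 L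
  have h1 : ∫ x, (L x) ^ 2 ∂μ = v := by
    have h2 : ∫ y, y ^ 2 ∂(μ.map L) = ∫ x, (L x) ^ 2 ∂μ :=
      integral_map (by fun_prop) (by fun_prop)
    rw [← h2, hv]
    have := variance_fun_id_gaussianReal (μ := 0) (v := v)
    rw [variance_eq_integral (by fun_prop)] at this
    simpa using this
  rw [hv, h1]; simp

theorem cg_mean {E : Type*} [NormedAddCommGroup E] [NormedSpace ℝ E]
    [MeasurableSpace E] [BorelSpace E] {μ : Measure E} (hG : IsCenteredGaussian μ)
    (L : E →L[ℝ] ℝ) : ∫ x, L x ∂μ = 0 := by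
  have h2 : ∫ y, y ∂(μ.map L) = ∫ x, L x ∂μ :=
      integral_map (by fun_prop) (by fun_prop)
  rw [← h2, cg_map hG]; simp

theorem cg_exp {E : Type*} [NormedAddCommGroup E] [NormedSpace ℝ E]
    [MeasurableSpace E] [BorelSpace E] {μ : Measure E} (hG : IsCenteredGaussian μ)
    (L : E →L[ℝ] ℝ) :
    Integrable (fun x => Real.exp (L x)) μ ∧
      ∫ x, Real.exp (L x) ∂μ = Real.exp ((∫ x, (L x) ^ 2 ∂μ) / 2) := by
  have hm := cg_map hG L
  have := mgf_gaussianReal hm 1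
  have hnn : 0 ≤ ∫ x, (L x) ^ 2 ∂μ := integral_nonneg fun x => sq_nonneg _
  simp only [mgf, one_mul, zero_add, one_pow, mul_one, Real.coe_toNNReal _ hnn] at this
  refine ⟨?_, this⟩
  by_contra h
  rw [integral_undef h] at this
  exact (Real.exp_pos _).ne this

theorem cg_lexp {E : Type*} [NormedAddCommGroup E] [NormedSpace ℝ E]
    [MeasurableSpace E] [BorelSpace E] {μ : Measure E} (hG : IsCenteredGaussian μ)
    (L : E →L[ℝ] ℝ) :
    ∫⁻ x, ENNReal.ofReal (Real.exp (L x)) ∂μ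
      = ENNReal.ofReal (Real.exp ((∫ x, (L x) ^ 2 ∂μ) / 2)) := by
  rw [← (cg_exp hG L).2, ofReal_integral_eq_lintegral_ofReal (cg_exp hG L).1]
  exact ae_of_all _ fun x => (Real.exp_pos _).le

/-- barycentre `∫ L(x) x dμ(x)` -/
def cgCov {E : Type*} [NormedAddCommGroup E] [NormedSpace ℝ E]
    [MeasurableSpace E] (μ : Measure E) (L : E →L[ℝ] ℝ) : E := ∫ x, L x • x ∂μ

theorem cg_int_mul {E : Type*} [NormedAddCommGroup E] [NormedSpace ℝ E]
    [MeasurableSpace E] [BorelSpace E] {μ : Measure E} (hG : IsCenteredGaussian μ)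
    (L L' : E →L[ℝ] ℝ) : Integrable (fun x => L x * L' x) μ := by
  have := cg_isGaussian hG
  exact (IsGaussian.memLp_dual μ L 2 (by simp)).integrable_mul
    (IsGaussian.memLp_dual μ L' 2 (by simp))

theorem cg_int_smul {μ : Measure E} (hG : IsCenteredGaussian μ)
    (L : E →L[ℝ] ℝ) : Integrable (fun x => L x • x) μ := by
  have := cg_isGaussian hG
  have : SecondCountableTopology E := UniformSpace.secondCountable_of_separable E
  have h2 := IsGaussian.memLp_two_id (μ := μ)
  have h3 : MemLp (fun x => L x • id x) 1 μ :=
    h2.smul (IsGaussian.memLp_dual μ L 2 (by simp))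
  exact memLp_one_iff_integrable.1 h3

theorem cg_cov_apply {μ : Measure E} (hG : IsCenteredGaussian μ)
    (L L' : E →L[ℝ] ℝ) : L' (cgCov μ L) = ∫ x, L x * L' x ∂μ := by
  rw [cgCov, ← L'.integral_comp_comm (cg_int_smul hG L)]
  simp

theorem cg_var_add {E : Type*} [NormedAddCommGroup E] [NormedSpace ℝ E]
    [MeasurableSpace E] [BorelSpace E] {μ : Measure E} (hG : IsCenteredGaussian μ)
    (L L' : E →L[ℝ] ℝ) (s t : ℝ) :
    ∫ x, ((s • L + t • L') x) ^ 2 ∂μ = s ^ 2 * (∫ x, (L x) ^ 2 ∂μ) +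
      2 * s * t * (∫ x, L x * L' x ∂μ) + t ^ 2 * ∫ x, (L' x) ^ 2 ∂μ := by
  have h1 := cg_int_mul hG L L
  have h2 := cg_int_mul hG L L'
  have h3 := cg_int_mul hG L' L'
  have e : ∀ x, ((s • L + t • L') x) ^ 2 = s ^ 2 * (L x * L x) + 2 * s * t * (L x * L' x)
      + t ^ 2 * (L' x * L' x) := by
    intro x; simp; ring
  simp_rw [e]
  have h12 : Integrable (fun x => s ^ 2 * (L x * L x) + 2 * s * t * (L x * L' x)) μ :=
    (h1.const_mul _).add (h2.const_mul _)
  rw [integral_add h12 (h3.const_mul _),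
    integral_add (h1.const_mul _) (h2.const_mul _)]
  simp only [integral_const_mul, sq]

theorem cg_tilt {μ : Measure E} (hG : IsCenteredGaussian μ) (L : E →L[ℝ] ℝ) :
    μ.tilted L = μ.map (fun x => x + cgCov μ L) := by
  have hg := cg_isGaussian hG
  have : SecondCountableTopology E := UniformSpace.secondCountable_of_separable E
  have hp : IsProbabilityMeasure (μ.tilted L) := isProbabilityMeasure_tilted (cg_exp hG L).1
  have hp' : IsProbabilityMeasure (μ.map (fun x => x + cgCov μ L)) :=
    Measure.isProbabilityMeasure_map (by fun_prop)
  refine Measure.ext_of_charFunDual ?_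
  ext L'
  have hm1 : ∀ t, mgf L' (μ.tilted L) t = Real.exp (t ^ 2 * (∫ x, (L' x) ^ 2 ∂μ) / 2
      + t * L' (cgCov μ L)) := by
    intro t
    rw [mgf, integral_tilted]
    have e : ∀ x, (Real.exp (L x) / ∫ x, Real.exp (L x) ∂μ) • Real.exp (t * L' x)
        = Real.exp (((1:ℝ) • L + t • L') x) / ∫ x, Real.exp (L x) ∂μ := by
      intro x
      simp [Real.exp_add]; ring
    simp_rw [e]
    rw [integral_div, (cg_exp hG _).2, (cg_exp hG _).2, cg_var_add hG, ← Real.exp_sub,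
      cg_cov_apply hG]
    congr 1; ring
  have hm2 : ∀ t, mgf L' (μ.map (fun x => x + cgCov μ L)) t
      = Real.exp (t ^ 2 * (∫ x, (L' x) ^ 2 ∂μ) / 2 + t * L' (cgCov μ L)) := by
    intro t
    rw [mgf, integral_map (by fun_prop) (by fun_prop)]
    have e : ∀ x, Real.exp (t * L' (x + cgCov μ L))
        = Real.exp (((0:ℝ) • L + t • L') x) * Real.exp (t * L' (cgCov μ L)) := by
      intro x
      rw [← Real.exp_add]; simp; ring
    simp_rw [e]
    rw [integral_mul_const, (cg_exp hG _).2, cg_var_add hG, ← Real.exp_add]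
    congr 1; ring
  have hmm : mgf L' (μ.tilted L) = mgf L' (μ.map (fun x => x + cgCov μ L)) := by
    ext t; rw [hm1, hm2]
  have huniv : integrableExpSet L' (μ.tilted L) = Set.univ := by
    ext t
    simp only [integrableExpSet, Set.mem_univ, iff_true]
    change Integrable _ _
    rw [← mgf_pos_iff, hm1]; exact Real.exp_pos _
  have := eqOn_complexMGF_of_mgf hmm (x := Complex.I) (by simp [huniv])
  simp only [complexMGF] at this
  rw [charFunDual_apply, charFunDual_apply]
  simpa [mul_comm] using this

theorem cg_neg {μ : Measure E} (hG : IsCenteredGaussian μ) :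
    μ.map (fun x => -x) = μ := by
  have hg := cg_isGaussian hG
  have : SecondCountableTopology E := UniformSpace.secondCountable_of_separable E
  have hp' : IsProbabilityMeasure (μ.map (fun x : E => -x)) :=
    Measure.isProbabilityMeasure_map (by fun_prop)
  refine Measure.ext_of_charFunDual ?_
  ext L'
  have e : L' ∘ (fun x => -x) = ((-L' : E →L[ℝ] ℝ) : E → ℝ) := by ext; simp
  rw [charFunDual_eq_charFun_map_one, charFunDual_eq_charFun_map_one,
    Measure.map_map (by fun_prop) (by fun_prop), e, cg_map hG, cg_map hG]
  simp

/-- Cameron-Martin lower bound. -/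
theorem cg_shift {μ : Measure E} (hG : IsCenteredGaussian μ) (L : E →L[ℝ] ℝ) (ε : ℝ) :
    ENNReal.ofReal (Real.exp (-(∫ x, (L x) ^ 2 ∂μ) / 2)) * μ (Metric.closedBall 0 ε)
      ≤ μ (Metric.closedBall (cgCov μ L) ε) := by
  set V := ∫ x, (L x) ^ 2 ∂μ with hV
  have hcov : cgCov μ (-L) = - cgCov μ L := by
    simp [cgCov, integral_neg]
  have h1 : μ (Metric.closedBall (cgCov μ L) ε) = μ.tilted (-L : E →L[ℝ] ℝ) (Metric.closedBall 0 ε) := by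
    rw [cg_tilt hG, Measure.map_apply (by fun_prop) measurableSet_closedBall, hcov]
    congr 1
    ext x
    simp [dist_eq_norm, sub_eq_add_neg]
  have hV' : ∫ x, ((-L : E →L[ℝ] ℝ) x) ^ 2 ∂μ = V := by simp [hV]
  have key : ∀ M : E →L[ℝ] ℝ, ∫ x, (M x) ^ 2 ∂μ = V →
      μ.tilted M (Metric.closedBall 0 ε) = ENNReal.ofReal (Real.exp (-V/2)) *
        ∫⁻ x in Metric.closedBall 0 ε, ENNReal.ofReal (Real.exp (M x)) ∂μ := by
    intro M hM
    rw [tilted_apply' _ _ measurableSet_closedBall, (cg_exp hG M).2, hM,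
      ← lintegral_const_mul _ (by fun_prop)]
    refine lintegral_congr fun x => ?_
    rw [← ENNReal.ofReal_mul (Real.exp_pos _).le, neg_div, Real.exp_neg, div_eq_inv_mul]
  rw [h1, key _ hV']
  gcongr
  have hsym : ∫⁻ x in Metric.closedBall 0 ε, ENNReal.ofReal (Real.exp ((-L : E →L[ℝ] ℝ) x)) ∂μ
      = ∫⁻ x in Metric.closedBall 0 ε, ENNReal.ofReal (Real.exp (L x)) ∂μ := by
    conv_rhs => rw [← cg_neg hG]
    rw [setLIntegral_map measurableSet_closedBall (by fun_prop) (by fun_prop)]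
    have : (fun x : E => -x) ⁻¹' (Metric.closedBall 0 ε) = Metric.closedBall 0 ε := by
      ext x; simp
    rw [this]; simp
  have h2 : 2 * μ (Metric.closedBall 0 ε) ≤
      2 * ∫⁻ x in Metric.closedBall 0 ε, ENNReal.ofReal (Real.exp ((-L : E →L[ℝ] ℝ) x)) ∂μ := by
    conv_rhs => rw [two_mul]
    nth_rewrite 2 [hsym]
    rw [← lintegral_add_left (by fun_prop), ← setLIntegral_const]
    refine lintegral_mono fun x => ?_
    rw [← ENNReal.ofReal_add (Real.exp_pos _).le (Real.exp_pos _).le]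
    rw [show (2:ℝ≥0∞) = ENNReal.ofReal 2 by simp]
    apply ENNReal.ofReal_le_ofReal
    have := Real.add_one_le_exp (L x)
    have := Real.add_one_le_exp (-(L x))
    simp only [neg_apply]
    linarith
  exact (ENNReal.mul_le_mul_iff_right (by simp) (by simp)).1 h2

theorem cg_gstep {μ : Measure E} (hG : IsCenteredGaussian μ) (Z : ℕ → E →L[ℝ] ℝ)
    (hZ : ∀ i, ∫ x, (Z i x) ^ 2 ∂μ ≤ 1) (N : ℕ) (i : E → ℕ) (hi : Measurable i)
    (hiN : ∀ x, i x ≤ N) (c s : ℝ) (hc0 : 0 ≤ c) (hc1 : c ≤ 1) :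
    ∫⁻ p, ENNReal.ofReal (Real.exp (c * Z (i p.1) p.1 - s * Z (i p.1) p.2)) ∂(μ.prod μ)
      ≤ ENNReal.ofReal (Real.exp (s ^ 2 / 2) *
        (1 + c * ∑ j ∈ Finset.range (N + 1), Real.exp ((∫ x, (Z j x) ^ 2 ∂μ) / 2))) := by
  have hg := cg_isGaussian hG
  have : SecondCountableTopology E := UniformSpace.secondCountable_of_separable E
  have hm : Measurable (fun q : ℕ × E => Z q.1 q.2) :=
    measurable_from_prod_countable_right fun k => (Z k).continuous.measurable
  have hm1 : Measurable (fun p : E × E => Z (i p.1) p.1) :=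
    hm.comp ((hi.comp measurable_fst).prodMk measurable_fst)
  have hm2 : Measurable (fun p : E × E => Z (i p.1) p.2) :=
    hm.comp ((hi.comp measurable_fst).prodMk measurable_snd)
  rw [lintegral_prod _ (by fun_prop)]
  have hinner : ∀ x, ∫⁻ y, ENNReal.ofReal (Real.exp (c * Z (i x) x - s * Z (i x) y)) ∂μ
      ≤ ENNReal.ofReal (Real.exp (s ^ 2 / 2)) * ENNReal.ofReal (1 + c * ∑ j ∈ Finset.range (N + 1),
        Real.exp (Z j x)) := by
    intro x
    have e : ∀ y, ENNReal.ofReal (Real.exp (c * Z (i x) x - s * Z (i x) y)) =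
        ENNReal.ofReal (Real.exp (c * Z (i x) x)) *
          ENNReal.ofReal (Real.exp (((-s) • Z (i x)) y)) := by
      intro y
      rw [← ENNReal.ofReal_mul (Real.exp_pos _).le, ← Real.exp_add]
      congr 2; simp; ring
    simp_rw [e]
    rw [lintegral_const_mul _ (by fun_prop), cg_lexp hG, mul_comm]
    have hv : ∫ y, (((-s) • Z (i x)) y) ^ 2 ∂μ ≤ s ^ 2 := by
      have : ∀ y, (((-s) • Z (i x)) y) ^ 2 = s ^ 2 * (Z (i x) y) ^ 2 := by
        intro y; simp; ring
      simp_rw [this]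
      rw [integral_const_mul]
      nlinarith [hZ (i x), sq_nonneg s]
    gcongr
    have h1 : Real.exp (c * Z (i x) x) ≤ 1 + c * Real.exp (Z (i x) x) := by
      have := convexOn_exp.2 (Set.mem_univ (0:ℝ)) (Set.mem_univ (Z (i x) x))
        (sub_nonneg.2 hc1) hc0 (by ring)
      simp only [smul_eq_mul, mul_zero, zero_add, Real.exp_zero, mul_one] at this
      linarith
    refine h1.trans ?_
    gcongr
    exact Finset.single_le_sum (f := fun j => Real.exp (Z j x)) (fun j _ => (Real.exp_pos _).le)
      (Finset.mem_range.2 (Nat.lt_succ_of_le (hiN x)))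
  refine (lintegral_mono hinner).trans ?_
  rw [lintegral_const_mul _ (by fun_prop), ENNReal.ofReal_mul (Real.exp_pos _).le]
  gcongr
  have hsumInt : Integrable (fun x => ∑ j ∈ Finset.range (N + 1), Real.exp (Z j x)) μ :=
    integrable_finsetSum _ fun j _ => (cg_exp hG (Z j)).1
  have hint2 : Integrable (fun x => 1 + c * ∑ j ∈ Finset.range (N + 1), Real.exp (Z j x)) μ :=
    (integrable_const _).add (hsumInt.const_mul _)
  rw [← ofReal_integral_eq_lintegral_ofReal hint2
    (ae_of_all _ fun x => by dsimp; positivity)]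
  apply le_of_eq
  congr 1
  rw [integral_add (integrable_const _) (hsumInt.const_mul _), integral_const_mul,
    integral_finsetSum _ fun j _ => (cg_exp hG (Z j)).1]
  simp [fun j => (cg_exp hG (Z j)).2]

theorem cg_chain {μ : Measure E} (hG : IsCenteredGaussian μ) (Z : ℕ → E →L[ℝ] ℝ) (a : ℕ → ℝ)
    (hZ : ∀ i, ∫ x, (Z i x) ^ 2 ∂μ ≤ 1) (N : ℕ) (M l : ℝ) (hl : 0 ≤ l)
    (n : ℕ) (hn : 0 < n) (hln : l * π ^ 2 / 8 / n ≤ 1) :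
    μ {x | ∃ i ≤ N, a i + M < Z i x} * μ {x | ∀ i ≤ N, Z i x ≤ a i} ≤
      ENNReal.ofReal (Real.exp (-l * M) * (Real.exp ((l * π / 2) ^ 2 / 2) *
        (1 + (l * π ^ 2 / 8 / n) *
          ∑ j ∈ Finset.range (N + 1), Real.exp ((∫ x, (Z j x) ^ 2 ∂μ) / 2)))) := by
  classical
  have hg := cg_isGaussian hG
  have : SecondCountableTopology E := UniformSpace.secondCountable_of_separable E
  have hn' : (0:ℝ) < n := by exact_mod_cast hn
  -- measurable selection of the active index
  let P : E → ℕ → Prop := fun x k => ∀ j ≤ N, Z j x - a j ≤ Z k x - a k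
  let i : E → ℕ := fun x => Nat.findGreatest (P x) N
  have hi : Measurable i := by
    apply measurable_findGreatest
    intro k _
    simp only [P]
    have : {x : E | ∀ j ≤ N, Z j x - a j ≤ Z k x - a k}
        = ⋂ j, ⋂ (_ : j ≤ N), {x | Z j x - a j ≤ Z k x - a k} := by ext; simp
    rw [this]
    refine MeasurableSet.iInter fun j => MeasurableSet.iInter fun _ => ?_
    exact measurableSet_le (by fun_prop) (by fun_prop)
  have hiN : ∀ x, i x ≤ N := fun x => Nat.findGreatest_le _
  have hmax : ∀ x, ∀ j ≤ N, Z j x - a j ≤ Z (i x) x - a (i x) := by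
    intro x
    obtain ⟨k, hk, hk2⟩ := Finset.exists_max_image (Finset.range (N + 1))
      (fun j => Z j x - a j) ⟨0, by simp⟩
    have hP : P x k := fun j hj => hk2 j (Finset.mem_range.2 (Nat.lt_succ_of_le hj))
    exact Nat.findGreatest_spec (P := P x) (Nat.lt_succ_iff.1 (Finset.mem_range.1 hk)) hP
  let F : E → ℝ := fun x => Z (i x) x - a (i x)
  set δ : ℝ := π / (2 * n) with hδ
  have hδ0 : 0 ≤ δ := by positivity
  let R : ℕ → E × E → E × E := fun k => ContinuousLinearMap.rotation (k * δ)
  have hR : ∀ k p, R k p = (Real.cos (k * δ) • p.1 + Real.sin (k * δ) • p.2,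
      - Real.sin (k * δ) • p.1 + Real.cos (k * δ) • p.2) := fun k p => rfl
  let G : E × E → ℝ := fun p => (1 - Real.cos δ) * Z (i p.1) p.1 - Real.sin δ * Z (i p.1) p.2
  have hm : Measurable (fun q : ℕ × E => Z q.1 q.2) :=
    measurable_from_prod_countable_right fun k => (Z k).continuous.measurable
  have hm1 : Measurable (fun p : E × E => Z (i p.1) p.1) :=
    hm.comp ((hi.comp measurable_fst).prodMk measurable_fst)
  have hm2 : Measurable (fun p : E × E => Z (i p.1) p.2) :=
    hm.comp ((hi.comp measurable_fst).prodMk measurable_snd)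
  have hGm : Measurable G := by fun_prop
  have hRm : ∀ k, Measurable (R k) := fun k => by
    have : Continuous (R k) := (ContinuousLinearMap.rotation (E := E) (k * δ)).continuous
    exact this.measurable
  have hstep : ∀ k p, F (R k p).1 - F (R (k + 1) p).1 ≤ G (R k p) := by
    intro k p
    have e : (R (k + 1) p).1 = Real.cos δ • (R k p).1 + Real.sin δ • (R k p).2 := by
      simp only [hR]
      push_cast
      rw [add_mul, one_mul, Real.cos_add, Real.sin_add]
      module
    have h1 := hmax (R (k + 1) p).1 (i (R k p).1) (hiN _)
    have h2 : Z (i (R k p).1) (R (k + 1) p).1 = Real.cos δ * Z (i (R k p).1) (R k p).1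
        + Real.sin δ * Z (i (R k p).1) (R k p).2 := by
      rw [e]; simp
    simp only [F, G]
    linarith
  have hR0 : ∀ p, (R 0 p).1 = p.1 := by intro p; simp [hR]
  have hRn : ∀ p, (R n p).1 = p.2 := by
    intro p
    have : (n:ℝ) * δ = π / 2 := by rw [hδ]; field_simp
    simp [hR, this]
  have hsum : ∀ p : E × E, F p.1 - F p.2 ≤ ∑ k ∈ Finset.range n, G (R k p) := by
    intro p
    have := Finset.sum_range_sub' (fun k => F (R k p).1) n
    rw [hR0, hRn] at this
    rw [← this]
    exact Finset.sum_le_sum fun k _ => hstep k p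
  have hjen : ∀ p : E × E, Real.exp (l * (F p.1 - F p.2)) ≤
      ∑ k ∈ Finset.range n, (1 / n : ℝ) * Real.exp (n * l * G (R k p)) := by
    intro p
    have h1 := convexOn_exp.map_sum_le (t := Finset.range n) (w := fun _ => (1 / n : ℝ))
      (p := fun k => n * l * G (R k p)) (fun _ _ => by positivity)
      (by simp; field_simp) (fun _ _ => Set.mem_univ _)
    simp only [smul_eq_mul] at h1
    refine le_trans (Real.exp_le_exp.2 ?_) h1
    have e : ∑ k ∈ Finset.range n, (1 / n : ℝ) * (n * l * G (R k p))
        = l * ∑ k ∈ Finset.range n, G (R k p) := by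
      rw [Finset.mul_sum]
      refine Finset.sum_congr rfl fun k _ => ?_
      field_simp
    rw [e]
    exact mul_le_mul_of_nonneg_left (hsum p) hl
  -- the integral bound
  set c : ℝ := l * π ^ 2 / 8 / n with hc
  set K : ℝ := ∑ j ∈ Finset.range (N + 1), Real.exp ((∫ x, (Z j x) ^ 2 ∂μ) / 2) with hK
  have hK0 : 0 ≤ K := Finset.sum_nonneg fun j _ => (Real.exp_pos _).le
  have hc' : n * l * (1 - Real.cos δ) ≤ c := by
    have h1 := Real.one_sub_sq_div_two_le_cos (x := δ)
    have h2 : n * l * (1 - Real.cos δ) ≤ n * l * (δ ^ 2 / 2) := by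
      gcongr; linarith
    refine h2.trans (le_of_eq ?_)
    rw [hc, hδ]; field_simp; norm_num
  have hc0 : 0 ≤ n * l * (1 - Real.cos δ) := by
    have := Real.cos_le_one δ
    have : 0 ≤ 1 - Real.cos δ := by linarith
    positivity
  have hs : (n * l * Real.sin δ) ^ 2 ≤ (l * π / 2) ^ 2 := by
    have hδπ : δ ≤ π := by
      rw [hδ]; apply div_le_self Real.pi_pos.le
      have : (1:ℝ) ≤ n := by exact_mod_cast hn
      linarith
    have h0 := Real.sin_nonneg_of_nonneg_of_le_pi hδ0 hδπ
    have h1 := Real.sin_le hδ0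
    have h2 : n * l * Real.sin δ ≤ n * l * δ := by gcongr
    have h3 : n * l * δ = l * π / 2 := by rw [hδ]; field_simp
    have : 0 ≤ n * l * Real.sin δ := by positivity
    gcongr
    linarith
  have hI : ∀ k, ∫⁻ p, ENNReal.ofReal (Real.exp (n * l * G (R k p))) ∂(μ.prod μ)
      ≤ ENNReal.ofReal (Real.exp ((l * π / 2) ^ 2 / 2) * (1 + c * K)) := by
    intro k
    have hrot : (μ.prod μ).map (R k) = μ.prod μ :=
      IsGaussian.map_rotation_eq_self_of_forall_strongDual_eq_zero (fun L => cg_mean hG L) _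
    have h1 : ∫⁻ p, ENNReal.ofReal (Real.exp (n * l * G (R k p))) ∂(μ.prod μ)
        = ∫⁻ p, ENNReal.ofReal (Real.exp (n * l * G p)) ∂(μ.prod μ) := by
      conv_rhs => rw [← hrot]
      rw [lintegral_map (by fun_prop) (hRm k)]
    rw [h1]
    have h2 := cg_gstep hG Z hZ N i hi hiN (n * l * (1 - Real.cos δ)) (n * l * Real.sin δ) hc0
      (hc'.trans hln)
    refine le_trans (le_of_eq ?_) (h2.trans ?_)
    · refine lintegral_congr fun p => ?_
      congr 2; simp only [G]; ring
    · apply ENNReal.ofReal_le_ofReal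
      gcongr
  have hmk : ∀ k, Measurable (fun p => ENNReal.ofReal (Real.exp (n * l * G (R k p)))) := fun k =>
    ENNReal.measurable_ofReal.comp (Real.measurable_exp.comp ((hGm.comp (hRm k)).const_mul _))
  let g : E × E → ℝ≥0∞ := fun p => ENNReal.ofReal (Real.exp (-l * M) / n) *
    ∑ k ∈ Finset.range n, ENNReal.ofReal (Real.exp (n * l * G (R k p)))
  have hgm : Measurable g := by
    refine Measurable.const_mul (Finset.measurable_sum _ fun k _ => hmk k) _
  rw [← Measure.prod_prod]
  have hsub : {x | ∃ i ≤ N, a i + M < Z i x} ×ˢ {x | ∀ i ≤ N, Z i x ≤ a i} ⊆ {p | 1 ≤ g p} := by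
    rintro p ⟨⟨j, hj, hjx⟩, hy⟩
    have h1 : M ≤ F p.1 - F p.2 := by
      have h2 := hmax p.1 j hj
      have h3 := hy (i p.2) (hiN _)
      simp only [F]; linarith
    have h4 := hjen p
    have h5 : 1 ≤ Real.exp (-l * M) * Real.exp (l * (F p.1 - F p.2)) := by
      rw [← Real.exp_add, Real.one_le_exp_iff]
      nlinarith
    have h6 : g p = ENNReal.ofReal (Real.exp (-l * M) *
        ∑ k ∈ Finset.range n, (1 / n : ℝ) * Real.exp (n * l * G (R k p))) := by
      simp only [g]
      rw [← ENNReal.ofReal_sum_of_nonneg (fun _ _ => (Real.exp_pos _).le),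
        ← ENNReal.ofReal_mul (by positivity), ← Finset.mul_sum]
      congr 1; ring
    change 1 ≤ g p
    rw [h6, ENNReal.one_le_ofReal]
    refine h5.trans ?_
    gcongr
  refine (measure_mono hsub).trans ?_
  have h7 := mul_meas_ge_le_lintegral (μ := μ.prod μ) hgm 1
  rw [one_mul] at h7
  refine h7.trans ?_
  simp only [g]
  rw [lintegral_const_mul _ (Finset.measurable_sum _ fun k _ => hmk k),
    lintegral_finsetSum _ (fun k _ => hmk k)]
  refine (mul_le_mul_right (Finset.sum_le_sum fun k _ => hI k) _).trans (le_of_eq ?_)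
  rw [Finset.sum_const, Finset.card_range, nsmul_eq_mul,
    show ((n : ℕ) : ℝ≥0∞) = ENNReal.ofReal n by simp, ← ENNReal.ofReal_mul hn'.le,
    ← ENNReal.ofReal_mul (by positivity)]
  congr 1
  field_simp

theorem cg_conc {μ : Measure E} (hG : IsCenteredGaussian μ) (Z : ℕ → E →L[ℝ] ℝ) (a : ℕ → ℝ)
    (hZ : ∀ i, ∫ x, (Z i x) ^ 2 ∂μ ≤ 1) (N : ℕ) (M : ℝ) (hM : 0 ≤ M) :
    μ {x | ∃ i ≤ N, a i + M < Z i x} * μ {x | ∀ i ≤ N, Z i x ≤ a i} ≤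
      ENNReal.ofReal (Real.exp (-(2 * M ^ 2 / π ^ 2))) := by
  set l : ℝ := 4 * M / π ^ 2 with hl
  have hl0 : 0 ≤ l := by positivity
  set K : ℝ := ∑ j ∈ Finset.range (N + 1), Real.exp ((∫ x, (Z j x) ^ 2 ∂μ) / 2) with hK
  have hlim0 : Tendsto (fun n : ℕ => l * π ^ 2 / 8 / n) atTop (𝓝 0) :=
    tendsto_const_div_atTop_nhds_zero_nat _
  have hlim : Tendsto (fun n : ℕ => ENNReal.ofReal (Real.exp (-l * M) *
      (Real.exp ((l * π / 2) ^ 2 / 2) * (1 + (l * π ^ 2 / 8 / n) * K)))) atTop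
      (𝓝 (ENNReal.ofReal (Real.exp (-l * M) *
      (Real.exp ((l * π / 2) ^ 2 / 2) * (1 + 0 * K))))) := by
    apply ENNReal.tendsto_ofReal
    exact ((hlim0.mul_const K).const_add 1 |>.const_mul _).const_mul _
  have he : Real.exp (-l * M) * (Real.exp ((l * π / 2) ^ 2 / 2) * (1 + 0 * K))
      = Real.exp (-(2 * M ^ 2 / π ^ 2)) := by
    rw [zero_mul, add_zero, mul_one, ← Real.exp_add]
    congr 1
    rw [hl]; field_simp; ring
  rw [he] at hlim
  refine ge_of_tendsto hlim ?_
  filter_upwards [eventually_gt_atTop 0, hlim0.eventually (ge_mem_nhds (zero_lt_one))] with n hn h1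
  exact cg_chain hG Z a hZ N M l hl0 n hn h1

theorem cg_ball_pos {μ : Measure E} (hG : IsCenteredGaussian μ) (ε : ℝ) (hε : 0 < ε) :
    0 < μ (Metric.closedBall 0 ε) := by
  have hg := cg_isGaussian hG
  have : SecondCountableTopology E := UniformSpace.secondCountable_of_separable E
  obtain ⟨x, -, hx⟩ := exists_mem_forall_mem_nhdsWithin_pos_measure (μ := μ) (s := Set.univ)
    (by simp)
  have hb : 0 < μ (Metric.ball x (ε / 2)) :=
    hx _ (by rw [nhdsWithin_univ]; exact Metric.ball_mem_nhds x (by positivity))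
  have hrot : (μ.prod μ).map (ContinuousLinearMap.rotation (-(π / 4))) = μ.prod μ :=
    IsGaussian.map_rotation_eq_self_of_forall_strongDual_eq_zero (fun L => cg_mean hG L) _
  have h1 : μ (Metric.closedBall 0 ε) =
      (μ.prod μ) (ContinuousLinearMap.rotation (-(π / 4)) ⁻¹' (Metric.closedBall 0 ε ×ˢ Set.univ)) := by
    rw [← Measure.map_apply (by fun_prop) (measurableSet_closedBall.prod MeasurableSet.univ),
      hrot, Measure.prod_prod]
    simp
  rw [h1]
  have h2 : 0 < (μ.prod μ) (Metric.ball x (ε / 2) ×ˢ Metric.ball x (ε / 2)) := by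
    rw [Measure.prod_prod]; exact ENNReal.mul_pos hb.ne' hb.ne'
  refine h2.trans_le (measure_mono ?_)
  rintro ⟨y, z⟩ ⟨hy, hz⟩
  refine ⟨?_, Set.mem_univ _⟩
  change Real.cos (-(π / 4)) • y + Real.sin (-(π / 4)) • z ∈ Metric.closedBall 0 ε
  simp only [Metric.mem_ball] at hy hz
  have e : Real.cos (-(π / 4)) • y + Real.sin (-(π / 4)) • z = (√2 / 2) • (y - z) := by
    simp [smul_sub, sub_eq_add_neg]
  rw [e, mem_closedBall_zero_iff, norm_smul, ← dist_eq_norm]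
  have h3 : dist y z ≤ ε := by
    have := dist_triangle_right y z x
    linarith
  have h4 : ‖√2 / 2‖ ≤ 1 := by
    rw [Real.norm_of_nonneg (by positivity)]
    have : √2 ≤ 2 := by rw [Real.sqrt_le_left (by norm_num)]; norm_num
    linarith
  calc ‖√2 / 2‖ * dist y z ≤ 1 * ε := by gcongr
    _ = ε := one_mul _

/-- A dense part of the Cameron-Martin ball of radius `m`. -/
def cgK {E : Type*} [NormedAddCommGroup E] [NormedSpace ℝ E]
    [MeasurableSpace E] (μ : Measure E) (m : ℝ) : Set E :=
  {h | ∃ L : E →L[ℝ] ℝ, ∫ x, (L x) ^ 2 ∂μ ≤ m ^ 2 ∧ h = cgCov μ L}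

theorem cgK_convex {μ : Measure E} (hG : IsCenteredGaussian μ) (m : ℝ) :
    Convex ℝ (cgK μ m) := by
  rintro _ ⟨L, hL, rfl⟩ _ ⟨L', hL', rfl⟩ s t hs ht hst
  refine ⟨s • L + t • L', ?_, ?_⟩
  · have h1 := cg_var_add hG L L' 1 (-1)
    have h2 : 0 ≤ ∫ x, (((1:ℝ) • L + (-1:ℝ) • L') x) ^ 2 ∂μ := integral_nonneg fun x => sq_nonneg _
    rw [cg_var_add hG]
    rw [h1] at h2
    set V := ∫ x, (L x) ^ 2 ∂μ
    set V' := ∫ x, (L' x) ^ 2 ∂μ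
    set W := ∫ x, L x * L' x ∂μ
    have h3 : 2 * W ≤ V + V' := by linarith
    have h4 : s * t * (2 * W) ≤ s * t * (V + V') := by gcongr
    have h5 : s ^ 2 * V + s * t * (V + V') + t ^ 2 * V' = s * V + t * V' := by
      have : t = 1 - s := by linarith
      subst this; ring
    have h6 : s * V + t * V' ≤ s * m ^ 2 + t * m ^ 2 := by gcongr
    have h7 : s * m ^ 2 + t * m ^ 2 = m ^ 2 := by rw [← add_mul, hst, one_mul]
    linarith
  · simp only [cgCov]
    have i1 : Integrable (fun x => s • L x • x) μ := (cg_int_smul hG L).smul s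
    have i2 : Integrable (fun x => t • L' x • x) μ := (cg_int_smul hG L').smul t
    rw [← integral_smul, ← integral_smul, ← integral_add i1 i2]
    refine integral_congr_ae (ae_of_all _ fun x => ?_)
    simp [add_smul, smul_smul]

theorem cgK_sup {μ : Measure E} (hG : IsCenteredGaussian μ) (m : ℝ)
    (L : E →L[ℝ] ℝ) : ∃ k ∈ cgK μ m, L k = m * √(∫ x, (L x) ^ 2 ∂μ) := by
  set V := ∫ x, (L x) ^ 2 ∂μ with hV
  have hV0 : 0 ≤ V := integral_nonneg fun x => sq_nonneg _
  rcases hV0.eq_or_lt with h | h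
  · refine ⟨0, ⟨0, by simp [sq_nonneg], by simp [cgCov]⟩, ?_⟩
    simp [← h]
  · have hs : 0 < √V := Real.sqrt_pos.2 h
    refine ⟨cgCov μ ((m / √V) • L), ⟨_, ?_, rfl⟩, ?_⟩
    · have : ∀ x, (((m / √V) • L) x) ^ 2 = (m / √V) ^ 2 * (L x) ^ 2 := by
        intro x; simp; ring
      simp_rw [this]
      rw [integral_const_mul, ← hV, div_pow, Real.sq_sqrt hV0, div_mul_cancel₀ _ h.ne']
    · rw [cg_cov_apply hG]
      have : ∀ x, ((m / √V) • L) x * L x = (m / √V) * (L x) ^ 2 := by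
        intro x; simp; ring
      simp_rw [this]
      rw [integral_const_mul, ← hV]
      nth_rewrite 2 [← Real.mul_self_sqrt hV0]
      field_simp

theorem cg_normalise {E : Type*} [NormedAddCommGroup E] [NormedSpace ℝ E]
    [MeasurableSpace E] {μ : Measure E} (L : E →L[ℝ] ℝ) (m a b : ℝ) (hm : 0 ≤ m)
    (h : a + m * √(∫ x, (L x) ^ 2 ∂μ) < b) :
    ∃ s : ℝ, 0 < s ∧ a + m * s < b ∧ ∫ x, ((s⁻¹ • L) x) ^ 2 ∂μ ≤ 1 := by
  set V := ∫ x, (L x) ^ 2 ∂μ with hV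
  have hV0 : 0 ≤ V := integral_nonneg fun x => sq_nonneg _
  have hpos : 0 < b - (a + m * √V) := by linarith
  set η := (b - (a + m * √V)) / (m + 1) with hη
  have hη0 : 0 < η := by positivity
  have hs0 : 0 < √V + η := by positivity
  have h3 : (m + 1) * η = b - (a + m * √V) := by rw [hη]; field_simp
  refine ⟨√V + η, hs0, by nlinarith, ?_⟩
  have : ∀ x, (((√V + η)⁻¹ • L) x) ^ 2 = (L x) ^ 2 / (√V + η) ^ 2 := by
    intro x; simp [mul_pow]; ring
  simp_rw [this]
  rw [integral_div, ← hV, div_le_one (by positivity)]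
  calc V = √V ^ 2 := (Real.sq_sqrt hV0).symm
    _ ≤ (√V + η) ^ 2 := by gcongr; linarith

theorem cg_mem_closure {μ : Measure E} (hG : IsCenteredGaussian μ) (m : ℝ) (hm : 0 ≤ m) (h : E)
    (hh : ∀ L : E →L[ℝ] ℝ, ∫ x, (L x) ^ 2 ∂μ ≤ 1 → L h ≤ m) : h ∈ closure (cgK μ m) := by
  by_contra hc
  obtain ⟨L, u, h1, h2⟩ := geometric_hahn_banach_closed_point (cgK_convex hG m).closure
    isClosed_closure hc
  obtain ⟨k, hk, hk2⟩ := cgK_sup hG m L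
  have h3 := h1 k (subset_closure hk)
  rw [hk2] at h3
  obtain ⟨s, hs, hs2, hs3⟩ := cg_normalise (μ := μ) L m 0 (L h) hm (by linarith)
  have h4 := hh _ hs3
  have h5 : s⁻¹ * L h ≤ m := by simpa using h4
  rw [inv_mul_le_iff₀ hs] at h5
  linarith

open Pointwise in
theorem cg_not_mem {μ : Measure E} (hG : IsCenteredGaussian μ) (M ε : ℝ) (hM : 0 ≤ M) (x : E)
    (hx : x ∉ closure (cgK μ M + Metric.closedBall 0 ε)) :
    ∃ (Z : E →L[ℝ] ℝ) (a : ℝ), ∫ x, (Z x) ^ 2 ∂μ ≤ 1 ∧ (∀ b ∈ Metric.closedBall 0 ε, Z b ≤ a) ∧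
      a + M < Z x := by
  obtain ⟨L, u, h1, h2⟩ := geometric_hahn_banach_closed_point
    ((cgK_convex hG M).add (convex_closedBall (0:E) ε)).closure isClosed_closure hx
  obtain ⟨k, hk, hk2⟩ := cgK_sup hG M L
  set σ := √(∫ x, (L x) ^ 2 ∂μ) with hσ
  obtain ⟨s, hs, hs2, hs3⟩ := cg_normalise (μ := μ) L M (u - M * σ) (L x) hM
    (by rw [← hσ]; linarith)
  refine ⟨s⁻¹ • L, s⁻¹ * (u - M * σ), hs3, ?_, ?_⟩
  · intro b hb
    have := h1 (k + b) (subset_closure (Set.add_mem_add hk hb))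
    rw [map_add, hk2] at this
    simp only [ContinuousLinearMap.smul_apply, smul_eq_mul]
    gcongr
    linarith
  · simp only [ContinuousLinearMap.smul_apply, smul_eq_mul]
    have : s⁻¹ * (u - M * σ) + M = s⁻¹ * (u - M * σ + M * s) := by field_simp
    rw [this]
    gcongr

open Pointwise in
theorem cg_compl {μ : Measure E} (hG : IsCenteredGaussian μ) (M ε : ℝ) (hM : 0 ≤ M) :
    μ (closure (cgK μ M + Metric.closedBall 0 ε))ᶜ * μ (Metric.closedBall 0 ε) ≤
      ENNReal.ofReal (Real.exp (-(2 * M ^ 2 / π ^ 2))) := by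
  have : SecondCountableTopology E := UniformSpace.secondCountable_of_separable E
  let I := {q : (E →L[ℝ] ℝ) × ℝ // ∫ x, (q.1 x) ^ 2 ∂μ ≤ 1 ∧
    ∀ b ∈ Metric.closedBall (0:E) ε, q.1 b ≤ q.2}
  let U : I → Set E := fun q => {x | q.1.2 + M < q.1.1 x}
  obtain ⟨T, hT, hTU⟩ := TopologicalSpace.isOpen_iUnion_countable U
    (fun q => isOpen_lt (by fun_prop) (by fun_prop))
  have q0 : I := ⟨(0, 0), by simp, by simp⟩
  obtain ⟨e, he⟩ := (hT.insert q0).exists_eq_range (Set.insert_nonempty _ _)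
  have hsub : (closure (cgK μ M + Metric.closedBall 0 ε))ᶜ ⊆ ⋃ n, U (e n) := by
    intro x hx
    obtain ⟨Z, a, h1, h2, h3⟩ := cg_not_mem hG M ε hM x hx
    have h4 : x ∈ ⋃ i, U i := Set.mem_iUnion.2 ⟨⟨(Z, a), h1, h2⟩, h3⟩
    rw [← hTU] at h4
    obtain ⟨q, hq, hxq⟩ := Set.mem_iUnion₂.1 h4
    have h5 : q ∈ Set.range e := by rw [← he]; exact Set.mem_insert_of_mem _ hq
    obtain ⟨n, rfl⟩ := h5
    exact Set.mem_iUnion.2 ⟨n, hxq⟩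
  refine (mul_le_mul_left (measure_mono hsub) _).trans ?_
  rw [measure_iUnion_eq_iSup_accumulate, ENNReal.iSup_mul]
  refine iSup_le fun N => ?_
  refine le_trans ?_ (cg_conc hG (fun n => (e n).1.1) (fun n => (e n).1.2)
    (fun n => (e n).2.1) N M hM)
  refine mul_le_mul' (measure_mono ?_) (measure_mono ?_)
  · intro x hx
    obtain ⟨i, hi, hxi⟩ := Set.mem_accumulate.1 hx
    exact ⟨i, hi, hxi⟩
  · intro x hx i _
    exact (e i).2.2 x hx

theorem cg_cover {E : Type*} [NormedAddCommGroup E] [MeasurableSpace E] [BorelSpace E]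
    (μ : Measure E) [IsProbabilityMeasure μ] (K : Set E) (ε c : ℝ) (hc : 0 < c)
    (hε : 0 < ε)
    (hK : ∀ h ∈ K, ENNReal.ofReal c ≤ μ (Metric.closedBall h ε)) :
    ∃ S : Finset E, (S.card : ℝ) ≤ 1 / c ∧ ∀ h ∈ K, ∃ g ∈ S, ‖h - g‖ ≤ 2 * ε := by
  classical
  have hcard : ∀ S : Finset E, (∀ g ∈ S, g ∈ K) → (∀ g ∈ S, ∀ g' ∈ S, g ≠ g' → 2 * ε < ‖g - g'‖) →
      (S.card : ℝ) ≤ 1 / c := by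
    intro S hS hsep
    have h1 : μ (⋃ g ∈ S, Metric.closedBall g ε) = ∑ g ∈ S, μ (Metric.closedBall g ε) := by
      apply measure_biUnion_finset
      · intro g hg g' hg' hne
        apply Metric.closedBall_disjoint_closedBall
        rw [dist_eq_norm]
        linarith [hsep g hg g' hg' hne]
      · intro g _; exact measurableSet_closedBall
    have h2 : ∑ g ∈ S, ENNReal.ofReal c ≤ 1 := by
      refine (Finset.sum_le_sum fun g hg => hK g (hS g hg)).trans ?_
      rw [← h1]; exact prob_le_one
    rw [Finset.sum_const, nsmul_eq_mul, show ((S.card : ℕ) : ℝ≥0∞) = ENNReal.ofReal S.card by simp,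
      ← ENNReal.ofReal_mul (by positivity), ENNReal.ofReal_le_one] at h2
    rwa [le_div_iff₀ hc]
  by_contra hcon
  push Not at hcon
  have hQ : ∀ n : ℕ, ∃ S : Finset E, (∀ g ∈ S, g ∈ K) ∧
      (∀ g ∈ S, ∀ g' ∈ S, g ≠ g' → 2 * ε < ‖g - g'‖) ∧ S.card = n := by
    intro n
    induction n with
    | zero => exact ⟨∅, by simp, by simp, by simp⟩
    | succ n ih =>
      obtain ⟨S, h1, h2, h3⟩ := ih
      obtain ⟨h, hh, hfar⟩ := hcon S (hcard S h1 h2)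
      have hnot : h ∉ S := fun hS => by
        have := hfar h hS
        simp at this; linarith
      refine ⟨insert h S, ?_, ?_, ?_⟩
      · intro g hg
        rcases Finset.mem_insert.1 hg with rfl | hg
        · exact hh
        · exact h1 g hg
      · intro g hg g' hg' hne
        rcases Finset.mem_insert.1 hg with h5 | h5 <;> rcases Finset.mem_insert.1 hg' with h6 | h6
        · exact absurd (h5.trans h6.symm) hne
        · rw [h5]; exact hfar g' h6
        · rw [h6, norm_sub_rev]; exact hfar g h5
        · exact h2 g h5 g' h6 hne
      · rw [Finset.card_insert_of_notMem hnot, h3]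
  obtain ⟨n, hn⟩ := exists_nat_gt (1 / c)
  obtain ⟨S, h1, h2, h3⟩ := hQ n
  have := hcard S h1 h2
  rw [h3] at this
  linarith

theorem cg_third {μ : Measure E} (hG : IsCenteredGaussian μ) (f : E) (ε γ : ℝ)
    (hε : 0 < ε) (hγ : 1 ≤ γ)
    (hcond : (⨅ h ∈ {h : E | ‖h - f‖ ≤ ε}, cmNormSq μ h) +
        ENNReal.ofReal (-Real.log ((μ {x | ‖x‖ ≤ ε}).toReal)) ≤ ENNReal.ofReal γ) :
    ENNReal.ofReal (Real.exp (-γ)) ≤ μ (Metric.closedBall 0 ε) ∧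
    ENNReal.ofReal (Real.exp (-γ)) ≤ μ {x | ‖x - f‖ ≤ 2 * ε} := by
  have hprob : IsProbabilityMeasure μ := hG.1
  have hb : {x : E | ‖x‖ ≤ ε} = Metric.closedBall 0 ε := by ext; simp
  rw [hb] at hcond
  have hpos := cg_ball_pos hG ε hε
  set p := (μ (Metric.closedBall 0 ε)).toReal with hp
  have hpp : μ (Metric.closedBall 0 ε) = ENNReal.ofReal p :=
    (ENNReal.ofReal_toReal (measure_ne_top _ _)).symm
  have hp0 : 0 < p := ENNReal.toReal_pos hpos.ne' (measure_ne_top _ _)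
  have hp1 : p ≤ 1 := by
    have : μ (Metric.closedBall 0 ε) ≤ 1 := prob_le_one
    rw [hpp, ENNReal.ofReal_le_one] at this
    exact this
  have hlog : 0 ≤ - Real.log p := by
    have := Real.log_nonpos hp0.le hp1
    linarith
  set I := ⨅ h ∈ {h : E | ‖h - f‖ ≤ ε}, cmNormSq μ h with hI
  have hItop : I ≠ ∞ := by
    have : I ≤ ENNReal.ofReal γ := le_self_add.trans hcond
    exact ne_top_of_le_ne_top ENNReal.ofReal_ne_top this
  set J := I.toReal with hJ
  have hIJ : I = ENNReal.ofReal J := (ENNReal.ofReal_toReal hItop).symm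
  have hJ0 : 0 ≤ J := ENNReal.toReal_nonneg
  have hmain : J - Real.log p ≤ γ := by
    rw [hIJ, ← ENNReal.ofReal_add hJ0 hlog, ENNReal.ofReal_le_ofReal_iff (by linarith)] at hcond
    linarith
  have hpexp : Real.exp (J - γ) ≤ p := by
    rw [← Real.le_log_iff_exp_le hp0]; linarith
  constructor
  · rw [hpp]
    apply ENNReal.ofReal_le_ofReal
    refine le_trans (Real.exp_le_exp.2 ?_) hpexp
    linarith
  have hstep : ∀ η : ℝ, 0 < η →
      ENNReal.ofReal (Real.exp (-γ - η / 2)) ≤ μ (Metric.closedBall f (2 * ε + η)) := by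
    intro η hη
    have h1 : I < ENNReal.ofReal (J + η) := by
      rw [hIJ, ENNReal.ofReal_lt_ofReal_iff (by linarith)]; linarith
    rw [hI] at h1
    simp only [iInf_lt_iff] at h1
    obtain ⟨h, hh, hlt⟩ := h1
    have hh' : ‖h - f‖ ≤ ε := hh
    have hmem : h ∈ closure (cgK μ (√(J + η))) := by
      apply cg_mem_closure hG _ (Real.sqrt_nonneg _)
      intro L hL
      have h2 : ENNReal.ofReal (L h) ^ 2 ≤ ENNReal.ofReal (J + η) := by
        refine le_trans ?_ hlt.le
        exact le_iSup₂ (f := fun (L : E →L[ℝ] ℝ) (_ : ∫ x, (L x) ^ 2 ∂μ ≤ 1) =>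
          ENNReal.ofReal (L h) ^ 2) L hL
      rcases le_or_gt (L h) 0 with h3 | h3
      · exact h3.trans (Real.sqrt_nonneg _)
      · rw [← ENNReal.ofReal_pow h3.le, ENNReal.ofReal_le_ofReal_iff (by linarith)] at h2
        exact Real.le_sqrt_of_sq_le h2
    obtain ⟨k, ⟨L, hL, rfl⟩, hk⟩ := Metric.mem_closure_iff.1 hmem η hη
    rw [Real.sq_sqrt (by linarith)] at hL
    have h4 := cg_shift hG L ε
    have hsub : Metric.closedBall (cgCov μ L) ε ⊆ Metric.closedBall f (2 * ε + η) := by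
      apply Metric.closedBall_subset_closedBall'
      have := dist_triangle_left (cgCov μ L) f h
      rw [← dist_eq_norm] at hh'
      linarith
    refine le_trans (le_trans ?_ h4) (measure_mono hsub)
    rw [hpp, ← ENNReal.ofReal_mul (Real.exp_pos _).le]
    apply ENNReal.ofReal_le_ofReal
    calc Real.exp (-γ - η / 2) ≤ Real.exp (-(∫ x, (L x) ^ 2 ∂μ) / 2) * Real.exp (J - γ) := by
          rw [← Real.exp_add]; apply Real.exp_le_exp.2; linarith
      _ ≤ _ := by gcongr
  have hset : {x : E | ‖x - f‖ ≤ 2 * ε} = ⋂ n : ℕ, Metric.closedBall f (2 * ε + 1 / ((n:ℝ) + 1)) := by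
    ext x
    simp only [Set.mem_setOf_eq, Set.mem_iInter, Metric.mem_closedBall, dist_eq_norm]
    constructor
    · intro h n
      have : (0:ℝ) < 1 / ((n:ℝ) + 1) := by positivity
      linarith
    · intro h
      have hl : Tendsto (fun n : ℕ => 2 * ε + 1 / ((n:ℝ) + 1)) atTop (𝓝 (2 * ε + 0)) :=
        tendsto_one_div_add_atTop_nhds_zero_nat.const_add _
      rw [add_zero] at hl
      exact ge_of_tendsto' hl h
  rw [hset]
  have ht : Tendsto (fun n : ℕ => μ (Metric.closedBall f (2 * ε + 1 / ((n:ℝ) + 1)))) atTop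
      (𝓝 (μ (⋂ n : ℕ, Metric.closedBall f (2 * ε + 1 / ((n:ℝ) + 1))))) := by
    apply tendsto_measure_iInter_atTop
    · exact fun n => measurableSet_closedBall.nullMeasurableSet
    · intro a b hab
      apply Metric.closedBall_subset_closedBall
      gcongr
    · exact ⟨0, measure_ne_top _ _⟩
  have hl : Tendsto (fun n : ℕ => ENNReal.ofReal (Real.exp (-γ - (1 / ((n:ℝ) + 1)) / 2))) atTop
      (𝓝 (ENNReal.ofReal (Real.exp (-γ - 0 / 2)))) := by
    apply ENNReal.tendsto_ofReal
    exact (Real.continuous_exp.tendsto _).comp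
      ((tendsto_one_div_add_atTop_nhds_zero_nat.div_const 2).const_sub _)
  rw [zero_div, sub_zero] at hl
  exact le_of_tendsto_of_tendsto' hl ht fun n => hstep _ (by positivity)

end helpers

/-- Theorem 2.1 of van der Vaart–van Zanten, generalised form.
Let `X` be a Borel-measurable zero-mean Gaussian random element of a separable Banach space
`(𝔹, ‖·‖)` with RKHS `(ℍ, ‖·‖_ℍ)`, and `f` in the closure of `ℍ` in `𝔹`. If `ε > 0` and
`γ ≥ 1` satisfy `inf_{h : ‖h-f‖ ≤ ε} ‖h‖²_ℍ - log ℙ(‖X‖ ≤ ε) ≤ γ`, then for any `C⋆ ≥ 1`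
there is a Borel set `B ⊆ 𝔹` with `log N(3ε, B, ‖·‖) ≤ 6C⋆γ`, `ℙ(X ∉ B) ≤ e^{-C⋆γ}` and
`ℙ(‖X - f‖ ≤ 2ε) ≥ e^{-γ}`. -/
theorem stmt_11 {E : Type*} [NormedAddCommGroup E] [NormedSpace ℝ E] [CompleteSpace E]
    [TopologicalSpace.SeparableSpace E] [MeasurableSpace E] [BorelSpace E]
    (μ : Measure E) (hG : IsCenteredGaussian μ) (f : E)
    (hf : f ∈ closure {h : E | cmNormSq μ h ≠ ∞})
    (ε γ : ℝ) (hε : 0 < ε) (hγ : 1 ≤ γ)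
    (hcond : (⨅ h ∈ {h : E | ‖h - f‖ ≤ ε}, cmNormSq μ h) +
        ENNReal.ofReal (-Real.log ((μ {x | ‖x‖ ≤ ε}).toReal)) ≤ ENNReal.ofReal γ)
    (Cs : ℝ) (hCs : 1 ≤ Cs) :
    ∃ B : Set E, MeasurableSet B ∧
      (covN (3 * ε) B : ℝ≥0∞) ≤ ENNReal.ofReal (Real.exp (6 * Cs * γ)) ∧
      μ Bᶜ ≤ ENNReal.ofReal (Real.exp (-Cs * γ)) ∧
      ENNReal.ofReal (Real.exp (-γ)) ≤ μ {x | ‖x - f‖ ≤ 2 * ε} := by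
  have hprob : IsProbabilityMeasure μ := hG.1
  obtain ⟨hball, hthird⟩ := cg_third hG f ε γ hε hγ hcond
  have hCg : γ ≤ Cs * γ := by nlinarith
  set M : ℝ := π * √(Cs * γ) with hM
  have hM0 : 0 ≤ M := by positivity
  have hM2 : M ^ 2 = π ^ 2 * (Cs * γ) := by
    rw [hM, mul_pow, Real.sq_sqrt (by positivity)]
  have hpi : π ^ 2 ≤ 10 := by
    have := Real.pi_lt_d2
    have := Real.pi_pos
    nlinarith
  set c : ℝ := Real.exp (-(M ^ 2) / 2 - γ) with hc
  have hK : ∀ h ∈ cgK μ M, ENNReal.ofReal c ≤ μ (Metric.closedBall h ε) := by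
    rintro _ ⟨L, hL, rfl⟩
    refine le_trans ?_ (cg_shift hG L ε)
    calc ENNReal.ofReal c
        ≤ ENNReal.ofReal (Real.exp (-(∫ x, (L x) ^ 2 ∂μ) / 2)) * ENNReal.ofReal (Real.exp (-γ)) := by
          rw [← ENNReal.ofReal_mul (Real.exp_pos _).le, ← Real.exp_add]
          apply ENNReal.ofReal_le_ofReal
          apply Real.exp_le_exp.2
          linarith
      _ ≤ _ := by gcongr
  obtain ⟨S, hS, hcov⟩ := cg_cover μ (cgK μ M) ε c (Real.exp_pos _) hε hK
  refine ⟨closure (Set.image2 (· + ·) (cgK μ M) (Metric.closedBall 0 ε)),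
    isClosed_closure.measurableSet, ?_, ?_, hthird⟩
  · have h1 : covN (3 * ε) (closure (Set.image2 (· + ·) (cgK μ M) (Metric.closedBall 0 ε)))
        ≤ (S.card : ℕ∞) := by
      refine iInf₂_le S ?_
      have hcl : IsClosed (⋃ g ∈ S, Metric.closedBall g (3 * ε)) :=
        S.finite_toSet.isClosed_biUnion fun g _ => Metric.isClosed_closedBall
      have hsub : Set.image2 (· + ·) (cgK μ M) (Metric.closedBall 0 ε)
          ⊆ ⋃ g ∈ S, Metric.closedBall g (3 * ε) := by
        rintro _ ⟨h, hh, b, hb, rfl⟩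
        obtain ⟨g, hg, hgh⟩ := hcov h hh
        refine Set.mem_iUnion₂.2 ⟨g, hg, ?_⟩
        rw [mem_closedBall_zero_iff] at hb
        rw [Metric.mem_closedBall, dist_eq_norm]
        have : h + b - g = (h - g) + b := by abel
        change ‖h + b - g‖ ≤ _
        rw [this]
        have := norm_add_le (h - g) b
        linarith
      intro x hx
      obtain ⟨g, hg, hxg⟩ := Set.mem_iUnion₂.1 (closure_minimal hsub hcl hx)
      exact ⟨g, hg, by rwa [Metric.mem_closedBall, dist_eq_norm] at hxg⟩
    have h2 : ((covN (3 * ε) (closure (Set.image2 (· + ·) (cgK μ M) (Metric.closedBall 0 ε))) : ℕ∞)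
        : ℝ≥0∞) ≤ (((S.card : ℕ) : ℕ∞) : ℝ≥0∞) := ENat.toENNReal_le.2 h1
    refine h2.trans ?_
    have h3 : (((S.card : ℕ) : ℕ∞) : ℝ≥0∞) = ENNReal.ofReal S.card := by simp
    rw [h3]
    apply ENNReal.ofReal_le_ofReal
    refine hS.trans ?_
    rw [hc, one_div, ← Real.exp_neg]
    apply Real.exp_le_exp.2
    rw [hM2]
    nlinarith [mul_nonneg (sub_nonneg.2 hpi) (show 0 ≤ Cs * γ by positivity)]
  · have h1 := cg_compl hG M ε hM0
    have h2 : μ (closure (Set.image2 (· + ·) (cgK μ M) (Metric.closedBall 0 ε)))ᶜ *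
        ENNReal.ofReal (Real.exp (-γ)) ≤ ENNReal.ofReal (Real.exp (-(2 * M ^ 2 / π ^ 2))) :=
      (mul_le_mul_right hball _).trans h1
    have h3 : ENNReal.ofReal (Real.exp (-(2 * M ^ 2 / π ^ 2))) ≤
        ENNReal.ofReal (Real.exp (-Cs * γ)) * ENNReal.ofReal (Real.exp (-γ)) := by
      rw [← ENNReal.ofReal_mul (Real.exp_pos _).le, ← Real.exp_add]
      apply ENNReal.ofReal_le_ofReal
      apply Real.exp_le_exp.2
      have : 2 * M ^ 2 / π ^ 2 = 2 * (Cs * γ) := by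
        rw [hM2]; field_simp
      rw [this]; linarith
    have h4 := h2.trans h3
    refine (ENNReal.mul_le_mul_iff_left ?_ ENNReal.ofReal_ne_top).1 h4
    exact (ENNReal.ofReal_pos.2 (Real.exp_pos _)).ne'

end
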